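/- arXiv:1207.5839 — 2 statements merged into one kernel-verified Lean document; each statement's English description precedes it below -/
import Mathlib

section
/- Consensus is reached among all occupied nodes: there exists v ∈ ℝ such that x̂_i(t) → v as t → ∞ for every compute node i, and moreover both max{ x̂_i(t) : i occupied at time t } and min{ x̂_i(t) : i occupied at time t } converge to v. -/
open Matrix Filter BigOperators
open scoped Classical

noncomputable section

/-- A directed graph on `Fin n` with `m` directed edges, edge `e` going from
`src e` to `tgt e`. -/
structure DGraph (n m : ℕ) where
  src : Fin m → Fin n
  tgt : Fin m → Fin n

/-- Hypotheses of the random-delay consensus model: no self-loops, distinct edges,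
`P` row stochastic respecting `G` (hence with positive diagonal), and `G` strongly
connected. -/
structure DGraph.Valid {n m : ℕ} (G : DGraph n m) (P : Matrix (Fin n) (Fin n) ℝ) : Prop where
  noSelf : ∀ e, G.src e ≠ G.tgt e
  edgeInj : ∀ e e', G.src e = G.src e' → G.tgt e = G.tgt e' → e = e'
  nonneg : ∀ i j, 0 ≤ P i j
  rowSum : ∀ i, ∑ j, P i j = 1
  support : ∀ i j, 0 < P i j ↔ i = j ∨ ∃ e, G.src e = j ∧ G.tgt e = i
  connected : ∀ i j : Fin n,
    Relation.ReflTransGen (fun a b => ∃ e, G.src e = a ∧ G.tgt e = b) i j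

/-- Delay nodes: for every directed edge `e : Fin m`, every chain-length index
`ℓ : Fin B` (the parallel chain modelling a delay of `ℓ.1 + 1`), and every
position `k : Fin B` with `k ≤ ℓ` along that chain.  There are `m·B(B+1)/2`
of them in total. -/
def DelayNode (m B : ℕ) : Type :=
  {q : Fin m × Fin B × Fin B // q.2.2.1 ≤ q.2.1.1}

instance (m B : ℕ) : Fintype (DelayNode m B) := by
  unfold DelayNode; infer_instance

instance (m B : ℕ) : DecidableEq (DelayNode m B) := by
  unfold DelayNode; infer_instance

namespace RandomDelay

variable {n m B : ℕ}

/-- The edge a delay node belongs to. -/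
def edgeOf (d : DelayNode m B) : Fin m := d.val.1
/-- The chain (of length `lenIdx d + 1`) a delay node belongs to. -/
def lenIdx (d : DelayNode m B) : ℕ := d.val.2.1.1
/-- The (0-indexed) position of a delay node along its chain. -/
def posIdx (d : DelayNode m B) : ℕ := d.val.2.2.1
/-- `d` is the terminal node of its chain. -/
def isTerminal (d : DelayNode m B) : Prop := d.val.2.2 = d.val.2.1

/-- The fixed block-diagonal forward-shift matrix `C`: a message at position `k`
of a chain moves to position `k+1` of the same chain. -/
def Cmat (m B : ℕ) : Matrix (DelayNode m B) (DelayNode m B) ℝ := fun d d' =>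
  if d.val.1 = d'.val.1 ∧ d.val.2.1 = d'.val.2.1 ∧ posIdx d = posIdx d' + 1 then 1 else 0

/-- The fixed delivery matrix `J`: `J i d = 1` iff `d` is the terminal node of a
chain on an edge pointing into compute node `i`. -/
def Jmat (G : DGraph n m) (B : ℕ) : Matrix (Fin n) (DelayNode m B) ℝ := fun i d =>
  if G.tgt (edgeOf d) = i ∧ isTerminal d then 1 else 0

/-- `L(t)`: zero-delay deliveries.  `L t i j = 1` iff at iteration `t` node `j`
sends its message on the edge `j → i` with zero delay. -/
def Lmat (G : DGraph n m) (del : ℕ → Fin m → Fin (B + 1)) (t : ℕ) :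
    Matrix (Fin n) (Fin n) ℝ := fun i j =>
  if ∃ e, G.src e = j ∧ G.tgt e = i ∧ (del t e).1 = 0 then 1 else 0

/-- `R(t)`: routing of messages into delay chains.  `R t d j = 1` iff `d` is the
first node of the chain of length `ℓ+1` on an edge out of `j`, and at iteration
`t` node `j`'s message on that edge is assigned delay `ℓ+1`. -/
def Rmat (G : DGraph n m) (del : ℕ → Fin m → Fin (B + 1)) (t : ℕ) :
    Matrix (DelayNode m B) (Fin n) ℝ := fun d j =>
  if G.src (edgeOf d) = j ∧ posIdx d = 0 ∧ (del t (edgeOf d)).1 = lenIdx d + 1 then 1 else 0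

/-- Occupancy vector: `φ 0 = 0` and `φ t = R(t)·1 + C·φ(t-1)`. -/
def phi (G : DGraph n m) (del : ℕ → Fin m → Fin (B + 1)) : ℕ → DelayNode m B → ℝ
  | 0 => fun _ => 0
  | t + 1 => Rmat G del (t + 1) *ᵥ (fun _ => 1) + Cmat m B *ᵥ phi G del t

/-- `ŵ_{ij}(t)`: the number of delay chains from `j` to `i` whose terminal node is
occupied at time `t - 1`, i.e. the number of delayed messages `i` receives from `j`
at iteration `t`. -/
def wgt (G : DGraph n m) (del : ℕ → Fin m → Fin (B + 1)) (t : ℕ) (i j : Fin n) : ℕ :=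
  (Finset.univ.filter (fun d : DelayNode m B =>
    G.tgt (edgeOf d) = i ∧ G.src (edgeOf d) = j ∧ isTerminal d ∧
      phi G del (t - 1) d = 1)).card

/-- Total number of messages (delayed plus undelayed) that `i` receives from `j`
at iteration `t`, as a real number. -/
def denom (G : DGraph n m) (del : ℕ → Fin m → Fin (B + 1)) (t : ℕ) (i j : Fin n) : ℝ :=
  (wgt G del t i j : ℝ) + Lmat G del t i j

/-- `P̄[L(t)]`: each entry `1` of `L(t)` (a zero-delay message from `j` to `i`) is
replaced with the weight `P i j / (ŵ_{ij} + L_{ij}(t))`. -/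
def PLmat (G : DGraph n m) (P : Matrix (Fin n) (Fin n) ℝ)
    (del : ℕ → Fin m → Fin (B + 1)) (t : ℕ) : Matrix (Fin n) (Fin n) ℝ := fun i j =>
  Lmat G del t i j * (P i j / denom G del t i j)

/-- `P̄[φ(t-1)]`: each entry `1` of `J·diag(φ(t-1))` (a delayed message from `j`
delivered to `i`) is replaced with the weight `P i j / (ŵ_{ij} + L_{ij}(t))`. -/
def PFmat (G : DGraph n m) (P : Matrix (Fin n) (Fin n) ℝ)
    (del : ℕ → Fin m → Fin (B + 1)) (t : ℕ) : Matrix (Fin n) (DelayNode m B) ℝ := fun i d =>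
  Jmat G B i d * phi G del (t - 1) d *
    (P i (G.src (edgeOf d)) / denom G del t i (G.src (edgeOf d)))

/-- Top-left block `P̂₁₁(t) = I − diag(P̄[φ(t−1)]·1_b + P̄[L(t)]·1_n) + P̄[L(t)]`. -/
def P11 (G : DGraph n m) (P : Matrix (Fin n) (Fin n) ℝ)
    (del : ℕ → Fin m → Fin (B + 1)) (t : ℕ) : Matrix (Fin n) (Fin n) ℝ :=
  1 - Matrix.diagonal (fun i => (∑ d, PFmat G P del t i d) + (∑ j, PLmat G P del t i j))
    + PLmat G P del t

/-- The delayed transition matrix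
`P̂(t) = [[P̂₁₁(t), P̄[φ(t−1)]], [R(t), C]]`. -/
def Phat (G : DGraph n m) (P : Matrix (Fin n) (Fin n) ℝ)
    (del : ℕ → Fin m → Fin (B + 1)) (t : ℕ) :
    Matrix (Fin n ⊕ DelayNode m B) (Fin n ⊕ DelayNode m B) ℝ :=
  Matrix.fromBlocks (P11 G P del t) (PFmat G P del t) (Rmat G del t) (Cmat m B)

/-- The state: `x̂(0) = (x(0), 0_b)` and `x̂(t) = P̂(t)·x̂(t−1)`. -/
def xhat (G : DGraph n m) (P : Matrix (Fin n) (Fin n) ℝ)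
    (del : ℕ → Fin m → Fin (B + 1)) (x0 : Fin n → ℝ) :
    ℕ → (Fin n ⊕ DelayNode m B) → ℝ
  | 0 => Sum.elim x0 (fun _ => 0)
  | t + 1 => Phat G P del (t + 1) *ᵥ xhat G P del x0 t

/-- The product `M(t) = P̂(t)·P̂(t−1)⋯P̂(1)` (with `M(0) = I`). -/
def Mprod (G : DGraph n m) (P : Matrix (Fin n) (Fin n) ℝ)
    (del : ℕ → Fin m → Fin (B + 1)) :
    ℕ → Matrix (Fin n ⊕ DelayNode m B) (Fin n ⊕ DelayNode m B) ℝ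
  | 0 => 1
  | t + 1 => Phat G P del (t + 1) * Mprod G P del t

/-- Top-left `n × n` block of `M(t)`. -/
def M1 (G : DGraph n m) (P : Matrix (Fin n) (Fin n) ℝ)
    (del : ℕ → Fin m → Fin (B + 1)) (t : ℕ) : Matrix (Fin n) (Fin n) ℝ :=
  fun i j => Mprod G P del t (Sum.inl i) (Sum.inl j)

/-- Bottom-left `b × n` block of `M(t)`. -/
def M2 (G : DGraph n m) (P : Matrix (Fin n) (Fin n) ℝ)
    (del : ℕ → Fin m → Fin (B + 1)) (t : ℕ) : Matrix (DelayNode m B) (Fin n) ℝ :=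
  fun d j => Mprod G P del t (Sum.inr d) (Sum.inl j)

/-- A node is occupied at time `t` if it is a compute node, or a delay node `d`
with `φ_d(t) = 1`. -/
def occupied (G : DGraph n m) (del : ℕ → Fin m → Fin (B + 1)) (t : ℕ) :
    (Fin n ⊕ DelayNode m B) → Prop
  | Sum.inl _ => True
  | Sum.inr d => phi G del t d = 1

/-- Maximum of the state over the occupied nodes at time `t`. -/
def occMax (G : DGraph n m) (P : Matrix (Fin n) (Fin n) ℝ)
    (del : ℕ → Fin m → Fin (B + 1)) (x0 : Fin n → ℝ) (t : ℕ) : ℝ :=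
  sSup {y : ℝ | ∃ v, occupied G del t v ∧ xhat G P del x0 t v = y}

/-- Minimum of the state over the occupied nodes at time `t`. -/
def occMin (G : DGraph n m) (P : Matrix (Fin n) (Fin n) ℝ)
    (del : ℕ → Fin m → Fin (B + 1)) (x0 : Fin n → ℝ) (t : ℕ) : ℝ :=
  sInf {y : ℝ | ∃ v, occupied G del t v ∧ xhat G P del x0 t v = y}

end RandomDelay

end

/-!
Every row of `P̂(t)` at a node occupied at time `t` is a probability vector carried by the nodes
occupied at time `t - 1`, so the occupied minimum increases and the occupied maximum decreases.
Follow messages through space-time, from `(t, w)` to `(t + 1, v)` whenever `v` gives `w` a weight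
of at least `ε`: a message held by a delay node moves on with weight one, and every message that
arrives gets a weight bounded away from zero, because only boundedly many arrive at once. Hence a
node `r` from which every compute node can be reached influences all occupied nodes after a fixed
time `T`, and over that time the spread between maximum and minimum shrinks by the factor
`1 - ε ^ T`.
-/

lemma exists_tendsto_of_monotone_of_antitone {f g : ℕ → ℝ} (hf : Monotone f) (hg : Antitone g)
    (hfg : ∀ t, f t ≤ g t) {q : ℝ} (hq : q < 1) {T : ℕ}
    (hgap : ∀ t, g (t + T) - f (t + T) ≤ q * (g t - f t)) :
    ∃ l, Tendsto f atTop (nhds l) ∧ Tendsto g atTop (nhds l) := by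
  have hf_lim := tendsto_atTop_ciSup hf
    ⟨g 0, Set.forall_mem_range.2 fun t => (hfg t).trans (hg t.zero_le)⟩
  have hg_lim := tendsto_atTop_ciInf hg
    ⟨f 0, Set.forall_mem_range.2 fun t => (hf t.zero_le).trans (hfg t)⟩
  have hgap_lim := hg_lim.sub hf_lim
  have hle : ⨆ t, f t ≤ ⨅ t, g t := le_of_tendsto_of_tendsto' hf_lim hg_lim hfg
  have hcontract : (⨅ t, g t) - ⨆ t, f t ≤ q * ((⨅ t, g t) - ⨆ t, f t) :=
    le_of_tendsto_of_tendsto' ((tendsto_add_atTop_iff_nat T).2 hgap_lim)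
      (hgap_lim.const_mul q) hgap
  have heq : ⨅ t, g t = ⨆ t, f t := by nlinarith
  exact ⟨_, hf_lim, heq ▸ hg_lim⟩

lemma sInf_image_le {V : Type*} [Finite V] (x : V → ℝ) {S : Set V} {v : V} (hv : v ∈ S) :
    sInf (x '' S) ≤ x v :=
  csInf_le (Set.toFinite _).bddBelow (Set.mem_image_of_mem x hv)

lemma le_sSup_image {V : Type*} [Finite V] (x : V → ℝ) {S : Set V} {v : V} (hv : v ∈ S) :
    x v ≤ sSup (x '' S) :=
  le_csSup (Set.toFinite _).bddAbove (Set.mem_image_of_mem x hv)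

section Averaging

variable {V : Type*}

/-- One step of influence in space-time: at iteration `t + 1` the node `v` of the support gives
weight at least `ε` to the node `w`. -/
inductive Influences (A : ℕ → Matrix V V ℝ) (S : ℕ → Set V) (ε : ℝ) : ℕ × V → ℕ × V → Prop
  | step {t : ℕ} {v w : V} (hv : v ∈ S (t + 1)) (hw : ε ≤ A (t + 1) v w) :
      Influences A S ε (t, w) (t + 1, v)

variable [Fintype V]

/-- Averaging on a moving support: for `v` in the support `S (t + 1)`, the row `v` of `A (t + 1)`
is a probability vector carried by `S t`. Rows outside the support are unconstrained. -/
structure IsAveraging (A : ℕ → Matrix V V ℝ) (S : ℕ → Set V) : Prop where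
  nonneg : ∀ t, ∀ v ∈ S (t + 1), ∀ w, 0 ≤ A (t + 1) v w
  eq_zero : ∀ t, ∀ v ∈ S (t + 1), ∀ w ∉ S t, A (t + 1) v w = 0
  sum_eq_one : ∀ t, ∀ v ∈ S (t + 1), ∑ w, A (t + 1) v w = 1

/-- `x` evolves by `x (t + 1) = A (t + 1) * x t`. -/
def IsTrajectory (A : ℕ → Matrix V V ℝ) (x : ℕ → V → ℝ) : Prop :=
  ∀ t, x (t + 1) = A (t + 1) *ᵥ x t

variable {A : ℕ → Matrix V V ℝ} {S : ℕ → Set V} {x : ℕ → V → ℝ} {a ε : ℝ}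

lemma IsTrajectory.neg (hx : IsTrajectory A x) : IsTrajectory A (-x) := fun t => by
  rw [Pi.neg_apply, Pi.neg_apply, hx t, mulVec_neg]

namespace IsAveraging

lemma mul_sub_nonneg (hA : IsAveraging A S) {t : ℕ} (ha : ∀ w ∈ S t, a ≤ x t w) {v : V}
    (hv : v ∈ S (t + 1)) (w : V) : 0 ≤ A (t + 1) v w * (x t w - a) := by
  by_cases hw : w ∈ S t
  · exact mul_nonneg (hA.nonneg t v hv w) (sub_nonneg.2 (ha w hw))
  · rw [hA.eq_zero t v hv w hw, zero_mul]

lemma sub_eq_sum_mul_sub (hA : IsAveraging A S) (hx : IsTrajectory A x) {t : ℕ} {v : V}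
    (hv : v ∈ S (t + 1)) (a : ℝ) : x (t + 1) v - a = ∑ w, A (t + 1) v w * (x t w - a) := by
  simp only [mul_sub, Finset.sum_sub_distrib, ← Finset.sum_mul, hA.sum_eq_one t v hv, one_mul,
    hx t, mulVec, dotProduct]

lemma le_of_forall_le (hA : IsAveraging A S) (hx : IsTrajectory A x) {s t : ℕ} (hst : s ≤ t)
    (ha : ∀ w ∈ S s, a ≤ x s w) : ∀ v ∈ S t, a ≤ x t v := by
  induction t, hst using Nat.le_induction with
  | base => exact ha
  | succ t _ ih =>
    intro v hv
    rw [← sub_nonneg, hA.sub_eq_sum_mul_sub hx hv]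
    exact Finset.sum_nonneg fun w _ => hA.mul_sub_nonneg ih hv w

lemma mul_sub_le_of_le (hA : IsAveraging A S) (hx : IsTrajectory A x) {t : ℕ}
    (ha : ∀ w ∈ S t, a ≤ x t w) {v w : V} (hv : v ∈ S (t + 1)) (hε : 0 < ε)
    (hw : ε ≤ A (t + 1) v w) : ε * (x t w - a) ≤ x (t + 1) v - a := by
  have hwS : w ∈ S t := by
    by_contra h
    exact (hε.trans_le hw).ne' (hA.eq_zero t v hv w h)
  calc ε * (x t w - a)
      ≤ A (t + 1) v w * (x t w - a) :=
        mul_le_mul_of_nonneg_right hw (sub_nonneg.2 (ha w hwS))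
    _ ≤ ∑ u, A (t + 1) v u * (x t u - a) :=
        Finset.single_le_sum (f := fun u => A (t + 1) v u * (x t u - a))
          (fun u _ => hA.mul_sub_nonneg ha hv u) (Finset.mem_univ w)
    _ = x (t + 1) v - a := (hA.sub_eq_sum_mul_sub hx hv a).symm

lemma pow_mul_sub_le_of_influences (hA : IsAveraging A S) (hx : IsTrajectory A x) (hε : 0 < ε)
    {p q : ℕ × V} (ha : ∀ w ∈ S p.1, a ≤ x p.1 w)
    (hpq : Relation.ReflTransGen (Influences A S ε) p q) :
    p.1 ≤ q.1 ∧ ε ^ (q.1 - p.1) * (x p.1 p.2 - a) ≤ x q.1 q.2 - a := by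
  induction hpq with
  | refl => simp
  | tail _ hstep ih =>
    obtain @⟨t, v, w, hv, hw⟩ := hstep
    obtain ⟨hpt, hbound⟩ := ih
    refine ⟨hpt.trans t.le_succ, ?_⟩
    calc ε ^ (t + 1 - p.1) * (x p.1 p.2 - a)
        = ε * (ε ^ (t - p.1) * (x p.1 p.2 - a)) := by rw [Nat.succ_sub hpt, pow_succ']; ring
      _ ≤ ε * (x t w - a) := mul_le_mul_of_nonneg_left hbound hε.le
      _ ≤ x (t + 1) v - a :=
        hA.mul_sub_le_of_le hx (hA.le_of_forall_le hx hpt ha) hv hε hw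

lemma sSup_sub_sInf_le (hA : IsAveraging A S) (hx : IsTrajectory A x) (hε : 0 < ε) {t T : ℕ} {r : V}
    (hne : (S (t + T)).Nonempty)
    (hr : ∀ v ∈ S (t + T), Relation.ReflTransGen (Influences A S ε) (t, r) (t + T, v)) :
    sSup (x (t + T) '' S (t + T)) - sInf (x (t + T) '' S (t + T)) ≤
      (1 - ε ^ T) * (sSup (x t '' S t) - sInf (x t '' S t)) := by
  have hlower : sInf (x t '' S t) + ε ^ T * (x t r - sInf (x t '' S t)) ≤
      sInf (x (t + T) '' S (t + T)) := by
    refine le_csInf (hne.image _) (Set.forall_mem_image.2 fun v hv => ?_)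
    have h := (hA.pow_mul_sub_le_of_influences hx hε (fun _ => sInf_image_le (x t)) (hr v hv)).2
    rw [Nat.add_sub_cancel_left] at h
    exact le_sub_iff_add_le'.1 h
  have hupper : sSup (x (t + T) '' S (t + T)) ≤
      sSup (x t '' S t) - ε ^ T * (sSup (x t '' S t) - x t r) := by
    refine csSup_le (hne.image _) (Set.forall_mem_image.2 fun v hv => ?_)
    have h := (hA.pow_mul_sub_le_of_influences hx.neg hε
      (fun _ hw => neg_le_neg (le_sSup_image (x t) hw)) (hr v hv)).2
    simp only [Nat.add_sub_cancel_left, Pi.neg_apply] at h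
    linarith
  linarith

theorem exists_tendsto_sInf_sSup (hA : IsAveraging A S) (hx : IsTrajectory A x) (hε : 0 < ε)
    {T : ℕ} (hT : ∀ t, ∃ r ∈ S t, ∀ v ∈ S (t + T),
      Relation.ReflTransGen (Influences A S ε) (t, r) (t + T, v)) :
    ∃ l, Tendsto (fun t => sInf (x t '' S t)) atTop (nhds l) ∧
      Tendsto (fun t => sSup (x t '' S t)) atTop (nhds l) := by
  have hne : ∀ t, (S t).Nonempty := fun t => (hT t).imp fun _ hr => hr.1
  have hmono : Monotone fun t => sInf (x t '' S t) := fun s t hst =>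
    le_csInf ((hne t).image _) (Set.forall_mem_image.2
      (hA.le_of_forall_le hx hst fun _ => sInf_image_le (x s)))
  have hanti : Antitone fun t => sSup (x t '' S t) := fun s t hst =>
    csSup_le ((hne t).image _) (Set.forall_mem_image.2 fun v hv =>
      neg_le_neg_iff.1 (hA.le_of_forall_le hx.neg hst
        (fun _ hw => neg_le_neg (le_sSup_image (x s) hw)) v hv))
  have hle : ∀ t, sInf (x t '' S t) ≤ sSup (x t '' S t) := fun t =>
    let ⟨_, hv⟩ := hne t
    (sInf_image_le (x t) hv).trans (le_sSup_image (x t) hv)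
  refine exists_tendsto_of_monotone_of_antitone hmono hanti hle
    (sub_lt_self 1 (pow_pos hε T)) (T := T) fun t => ?_
  obtain ⟨r, -, hr⟩ := hT t
  exact hA.sSup_sub_sInf_le hx hε (hne _) hr

end IsAveraging

end Averaging

namespace RandomDelay

variable {n m B : ℕ}

/-- The node preceding `d` on its chain; by truncated subtraction, `d` itself if `d` comes first. -/
def prevNode (d : DelayNode m B) : DelayNode m B :=
  ⟨(d.val.1, d.val.2.1, ⟨d.val.2.2.1 - 1, (Nat.sub_le _ _).trans_lt d.val.2.2.2⟩),
    (Nat.sub_le _ _).trans d.property⟩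

/-- The node from which a message enters the delay node `d`: the preceding node of the chain, or
the sending compute node if `d` comes first. -/
def feeder (G : DGraph n m) (d : DelayNode m B) : Fin n ⊕ DelayNode m B :=
  if posIdx d = 0 then Sum.inl (G.src (edgeOf d)) else Sum.inr (prevNode d)

/-- The adjacency relation of the graph, in the direction of the messages. -/
def HasEdge (G : DGraph n m) (a b : Fin n) : Prop :=
  ∃ e, G.src e = a ∧ G.tgt e = b

/-- Weights for which every `P̂(t)` averages over occupied nodes. Unlike in `DGraph.Valid`, rows of
`P` may sum to less than one (the missing mass goes to the diagonal of `P̂₁₁(t)`), and the graph may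
be disconnected and have parallel edges. -/
structure IsWeighting (G : DGraph n m) (P : Matrix (Fin n) (Fin n) ℝ) : Prop where
  src_ne_tgt : ∀ e, G.src e ≠ G.tgt e
  nonneg : ∀ i j, 0 ≤ P i j
  sum_le_one : ∀ i, ∑ j, P i j ≤ 1
  diag_pos : ∀ i, 0 < P i i
  edge_pos : ∀ e, 0 < P (G.tgt e) (G.src e)

/-- `ε` is a lower bound for the positive weights occurring in the compute rows of all `P̂(t)`;
at most one message per delay node and one undelayed message share a weight of `P`. -/
structure IsWeightFloor (G : DGraph n m) (P : Matrix (Fin n) (Fin n) ℝ) (B : ℕ) (ε : ℝ) :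
    Prop where
  pos : 0 < ε
  le_diag : ∀ i, ε ≤ P i i
  le_edge : ∀ e, ε ≤ P (G.tgt e) (G.src e) / (Fintype.card (DelayNode m B) + 1)

/-- `Reaches G P del ε (s, w) (t, v)`: a chain of influences of weight at least `ε` leads through
occupied nodes from `w` at time `s` to `v` at time `t`. -/
def Reaches (G : DGraph n m) (P : Matrix (Fin n) (Fin n) ℝ) (del : ℕ → Fin m → Fin (B + 1))
    (ε : ℝ) : ℕ × (Fin n ⊕ DelayNode m B) → ℕ × (Fin n ⊕ DelayNode m B) → Prop :=
  Relation.ReflTransGen (Influences (Phat G P del) (fun t => {v | occupied G del t v}) ε)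

variable {G : DGraph n m} {P : Matrix (Fin n) (Fin n) ℝ} {del : ℕ → Fin m → Fin (B + 1)} {ε : ℝ}

lemma IsWeighting.of_valid (hV : G.Valid P) : IsWeighting G P where
  src_ne_tgt := hV.noSelf
  nonneg := hV.nonneg
  sum_le_one i := (hV.rowSum i).le
  diag_pos i := (hV.support i i).2 (Or.inl rfl)
  edge_pos e := (hV.support _ _).2 (Or.inr ⟨e, rfl, rfl⟩)

section Occupancy

lemma eq_prevNode_iff {d d' : DelayNode m B} (hd : posIdx d ≠ 0) :
    d' = prevNode d ↔
      d.val.1 = d'.val.1 ∧ d.val.2.1 = d'.val.2.1 ∧ posIdx d = posIdx d' + 1 := by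
  constructor
  · rintro rfl
    exact ⟨rfl, rfl, (Nat.sub_add_cancel (Nat.pos_of_ne_zero hd)).symm⟩
  · rintro ⟨hedge, hlen, hpos⟩
    refine Subtype.ext (Prod.ext hedge.symm (Prod.ext hlen.symm (Fin.ext ?_)))
    exact (Nat.sub_eq_of_eq_add hpos).symm

lemma Cmat_row (d : DelayNode m B) :
    Cmat m B d = if posIdx d = 0 then 0 else Pi.single (prevNode d) 1 := by
  ext d'
  by_cases hd : posIdx d = 0
  · simp [Cmat, hd]
  · simp [Cmat, hd, Pi.single_apply, eq_prevNode_iff hd]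

lemma Rmat_row (G : DGraph n m) (del : ℕ → Fin m → Fin (B + 1)) (t : ℕ) (d : DelayNode m B) :
    Rmat G del t d = if posIdx d = 0 ∧ (del t (edgeOf d)).1 = lenIdx d + 1 then
      Pi.single (G.src (edgeOf d)) 1 else 0 := by
  ext j
  by_cases hd : posIdx d = 0 ∧ (del t (edgeOf d)).1 = lenIdx d + 1
  · simp [Rmat, hd, Pi.single_apply, eq_comm]
  · simp [Rmat, hd]

lemma phi_succ (G : DGraph n m) (del : ℕ → Fin m → Fin (B + 1)) (t : ℕ) (d : DelayNode m B) :
    phi G del (t + 1) d =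
      if posIdx d = 0 then (if (del (t + 1) (edgeOf d)).1 = lenIdx d + 1 then 1 else 0)
      else phi G del t (prevNode d) := by
  rw [phi, Pi.add_apply, mulVec, mulVec, Cmat_row, Rmat_row]
  by_cases hd : posIdx d = 0
  · by_cases hdel : (del (t + 1) (edgeOf d)).1 = lenIdx d + 1 <;> simp [hd, hdel]
  · simp [hd]

lemma phi_eq_zero_or_one (G : DGraph n m) (del : ℕ → Fin m → Fin (B + 1)) (t : ℕ) :
    ∀ d : DelayNode m B, phi G del t d = 0 ∨ phi G del t d = 1 := by
  induction t with
  | zero => exact fun _ => Or.inl rfl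
  | succ t ih =>
    intro d
    rw [phi_succ]
    split_ifs
    · exact Or.inr rfl
    · exact Or.inl rfl
    · exact ih _

lemma occupied_feeder {t : ℕ} {d : DelayNode m B} (hd : phi G del (t + 1) d = 1) :
    occupied G del t (feeder G d) := by
  rw [phi_succ] at hd
  unfold feeder
  split_ifs at hd ⊢
  · trivial
  · exact absurd hd zero_ne_one
  · exact hd

lemma Phat_inr_of_phi_eq_one (P : Matrix (Fin n) (Fin n) ℝ) {t : ℕ} {d : DelayNode m B}
    (hd : phi G del (t + 1) d = 1) :
    Phat G P del (t + 1) (Sum.inr d) = Pi.single (feeder G d) 1 := by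
  rw [phi_succ] at hd
  have hrow : Phat G P del (t + 1) (Sum.inr d) = Sum.elim (Rmat G del (t + 1) d) (Cmat m B d) := by
    ext (j | d') <;> rfl
  rw [hrow, Cmat_row, Rmat_row, feeder]
  split_ifs at hd ⊢ <;> simp_all

lemma phi_add_posIdx {t : ℕ} {d : DelayNode m B}
    (hdel : (del (t + 1) (edgeOf d)).1 = lenIdx d + 1) : phi G del (t + 1 + posIdx d) d = 1 := by
  induction hp : posIdx d generalizing d with
  | zero => simp [phi_succ, hp, hdel]
  | succ p ih =>
    have hprev : posIdx (prevNode d) = p := Nat.sub_eq_of_eq_add hp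
    rw [← add_assoc, phi_succ, if_neg (by omega)]
    exact ih hdel hprev

end Occupancy

section Weights

lemma Lmat_nonneg (G : DGraph n m) (del : ℕ → Fin m → Fin (B + 1)) (t : ℕ) (i j : Fin n) :
    0 ≤ Lmat G del t i j := by
  unfold Lmat; split_ifs <;> norm_num

lemma denom_nonneg (G : DGraph n m) (del : ℕ → Fin m → Fin (B + 1)) (t : ℕ) (i j : Fin n) :
    0 ≤ denom G del t i j :=
  add_nonneg (Nat.cast_nonneg _) (Lmat_nonneg G del t i j)

lemma denom_le (G : DGraph n m) (del : ℕ → Fin m → Fin (B + 1)) (t : ℕ) (i j : Fin n) :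
    denom G del t i j ≤ Fintype.card (DelayNode m B) + 1 := by
  refine add_le_add (Nat.cast_le.2 (Finset.card_le_univ _)) ?_
  unfold Lmat; split_ifs <;> norm_num

lemma denom_self (hloop : ∀ e, G.src e ≠ G.tgt e) (del : ℕ → Fin m → Fin (B + 1)) (t : ℕ)
    (i : Fin n) : denom G del t i i = 0 := by
  have hw : wgt G del t i i = 0 := by
    rw [wgt, Finset.card_eq_zero, Finset.filter_eq_empty_iff]
    rintro d - ⟨htgt, hsrc, -⟩
    exact hloop _ (hsrc.trans htgt.symm)
  have hL : Lmat G del t i i = 0 := by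
    refine if_neg ?_
    rintro ⟨e, hsrc, htgt, -⟩
    exact hloop e (hsrc.trans htgt.symm)
  rw [denom, hw, hL, Nat.cast_zero, add_zero]

lemma PLmat_nonneg (hP : ∀ i j, 0 ≤ P i j) (del : ℕ → Fin m → Fin (B + 1)) (t : ℕ)
    (i j : Fin n) : 0 ≤ PLmat G P del t i j :=
  mul_nonneg (Lmat_nonneg ..) (div_nonneg (hP i j) (denom_nonneg ..))

lemma PFmat_nonneg (hP : ∀ i j, 0 ≤ P i j) (del : ℕ → Fin m → Fin (B + 1)) (t : ℕ)
    (i : Fin n) (d : DelayNode m B) : 0 ≤ PFmat G P del t i d := by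
  refine mul_nonneg (mul_nonneg ?_ ?_) (div_nonneg (hP _ _) (denom_nonneg ..))
  · unfold Jmat; split_ifs <;> norm_num
  · rcases phi_eq_zero_or_one G del (t - 1) d with h | h <;> simp [h]

lemma sum_PFmat (G : DGraph n m) (P : Matrix (Fin n) (Fin n) ℝ)
    (del : ℕ → Fin m → Fin (B + 1)) (t : ℕ) (i : Fin n) :
    ∑ d, PFmat G P del t i d = ∑ j, (wgt G del t i j : ℝ) * (P i j / denom G del t i j) := by
  rw [← Finset.sum_fiberwise Finset.univ (fun d : DelayNode m B => G.src (edgeOf d))]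
  refine Finset.sum_congr rfl fun j _ => ?_
  rw [wgt, Finset.card_eq_sum_ones, Nat.cast_sum, Finset.sum_mul, Finset.sum_filter,
    Finset.sum_filter]
  refine Finset.sum_congr rfl fun d _ => ?_
  by_cases hj : G.src (edgeOf d) = j
  · rcases phi_eq_zero_or_one G del (t - 1) d with h | h <;>
      simp [PFmat, Jmat, h, hj, ite_and]
  · simp [hj]

lemma sum_PFmat_add_sum_PLmat (G : DGraph n m) (P : Matrix (Fin n) (Fin n) ℝ)
    (del : ℕ → Fin m → Fin (B + 1)) (t : ℕ) (i : Fin n) :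
    ∑ d, PFmat G P del t i d + ∑ j, PLmat G P del t i j =
      ∑ j, denom G del t i j * (P i j / denom G del t i j) := by
  simp only [sum_PFmat, PLmat, ← Finset.sum_add_distrib, ← add_mul, denom]

lemma sum_PFmat_add_sum_PLmat_le (hP : IsWeighting G P) (del : ℕ → Fin m → Fin (B + 1)) (t : ℕ)
    (i : Fin n) : ∑ d, PFmat G P del t i d + ∑ j, PLmat G P del t i j ≤ 1 - P i i := by
  have hterm : ∀ j, denom G del t i j * (P i j / denom G del t i j) ≤ P i j := fun j => by
    rw [mul_div_left_comm]
    exact mul_le_of_le_one_right (hP.nonneg i j) (div_self_le_one _)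
  rw [sum_PFmat_add_sum_PLmat, ← Finset.add_sum_erase _ _ (Finset.mem_univ i),
    denom_self hP.src_ne_tgt, zero_mul, zero_add, le_sub_iff_add_le']
  calc P i i + ∑ j ∈ Finset.univ.erase i, denom G del t i j * (P i j / denom G del t i j)
      ≤ P i i + ∑ j ∈ Finset.univ.erase i, P i j := by gcongr with j; exact hterm j
    _ = ∑ j, P i j := Finset.add_sum_erase _ _ (Finset.mem_univ i)
    _ ≤ 1 := hP.sum_le_one i

lemma le_P11_self (hP : IsWeighting G P) (del : ℕ → Fin m → Fin (B + 1)) (t : ℕ) (i : Fin n) :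
    P i i ≤ P11 G P del t i i := by
  have hreceived := sum_PFmat_add_sum_PLmat_le hP del t i
  have hself := PLmat_nonneg (G := G) hP.nonneg del t i i
  simp only [P11, Matrix.add_apply, Matrix.sub_apply, one_apply_eq, diagonal_apply_eq]
  linarith

lemma P11_of_ne (G : DGraph n m) (P : Matrix (Fin n) (Fin n) ℝ)
    (del : ℕ → Fin m → Fin (B + 1)) (t : ℕ) {i j : Fin n} (h : i ≠ j) :
    P11 G P del t i j = PLmat G P del t i j := by
  simp [P11, one_apply_ne h, diagonal_apply_ne _ h]

lemma P11_nonneg (hP : IsWeighting G P) (del : ℕ → Fin m → Fin (B + 1)) (t : ℕ) (i j : Fin n) :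
    0 ≤ P11 G P del t i j := by
  obtain rfl | h := eq_or_ne i j
  · exact (hP.nonneg i i).trans (le_P11_self hP del t i)
  · exact (PLmat_nonneg hP.nonneg del t i j).trans_eq (P11_of_ne G P del t h).symm

lemma sum_Phat_inl (G : DGraph n m) (P : Matrix (Fin n) (Fin n) ℝ)
    (del : ℕ → Fin m → Fin (B + 1)) (t : ℕ) (i : Fin n) :
    ∑ v, Phat G P del t (Sum.inl i) v = 1 := by
  simp only [Phat, Fintype.sum_sum_type, fromBlocks_apply₁₁, fromBlocks_apply₁₂, P11,
    Matrix.add_apply, Matrix.sub_apply, Finset.sum_add_distrib, Finset.sum_sub_distrib, one_apply,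
    diagonal_apply, Finset.sum_ite_eq, Finset.mem_univ, if_true]
  ring

theorem isAveraging_Phat (hP : IsWeighting G P) (del : ℕ → Fin m → Fin (B + 1)) :
    IsAveraging (Phat G P del) (fun t => {v | occupied G del t v}) where
  nonneg := by
    rintro t (i | d) hv w
    · rcases w with j | d
      · exact P11_nonneg hP del _ i j
      · exact PFmat_nonneg hP.nonneg del _ i d
    · rw [Phat_inr_of_phi_eq_one P hv]
      exact (Pi.single_nonneg (α := fun _ => ℝ)).2 zero_le_one w
  eq_zero := by
    rintro t (i | d) hv w hw
    · rcases w with j | d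
      · exact absurd trivial hw
      · have hphi : phi G del t d = 0 := (phi_eq_zero_or_one G del t d).resolve_right hw
        simp [Phat, PFmat, hphi]
    · rw [Phat_inr_of_phi_eq_one P hv, Pi.single_eq_of_ne]
      rintro rfl
      exact hw (occupied_feeder hv)
  sum_eq_one := by
    rintro t (i | d) hv
    · exact sum_Phat_inl G P del _ i
    · simp [Phat_inr_of_phi_eq_one P hv]

lemma exists_isWeightFloor (hP : IsWeighting G P) (B : ℕ) : ∃ ε, IsWeightFloor G P B ε := by
  let weight : Fin n ⊕ Fin m → Set.Ioi (0 : ℝ) := Sum.elim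
    (fun i => ⟨P i i, hP.diag_pos i⟩)
    (fun e => ⟨P (G.tgt e) (G.src e) / (Fintype.card (DelayNode m B) + 1),
      div_pos (hP.edge_pos e) (by positivity)⟩)
  obtain ⟨ε, hε⟩ := Finite.exists_ge weight
  exact ⟨ε, ε.2, fun i => hε (Sum.inl i), fun e => hε (Sum.inr e)⟩

namespace IsWeightFloor

lemma le_one (hε : IsWeightFloor G P B ε) (hP : IsWeighting G P) (i : Fin n) : ε ≤ 1 :=
  calc ε ≤ P i i := hε.le_diag i
    _ ≤ ∑ j, P i j := Finset.single_le_sum (fun j _ => hP.nonneg i j) (Finset.mem_univ i)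
    _ ≤ 1 := hP.sum_le_one i

lemma le_div_denom (hε : IsWeightFloor G P B ε) (hP : IsWeighting G P)
    (del : ℕ → Fin m → Fin (B + 1)) (t : ℕ) (e : Fin m)
    (hd : 0 < denom G del t (G.tgt e) (G.src e)) :
    ε ≤ P (G.tgt e) (G.src e) / denom G del t (G.tgt e) (G.src e) :=
  (hε.le_edge e).trans (div_le_div_of_nonneg_left (hP.nonneg _ _) hd (denom_le ..))

lemma le_Phat_of_undelayed (hε : IsWeightFloor G P B ε) (hP : IsWeighting G P) {t : ℕ} {e : Fin m}
    (he : (del t e).1 = 0) : ε ≤ Phat G P del t (Sum.inl (G.tgt e)) (Sum.inl (G.src e)) := by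
  have hL : Lmat G del t (G.tgt e) (G.src e) = 1 := if_pos ⟨e, rfl, rfl, he⟩
  have hden : 0 < denom G del t (G.tgt e) (G.src e) := by
    rw [denom, hL]; positivity
  rw [Phat, fromBlocks_apply₁₁, P11_of_ne _ _ _ _ (hP.src_ne_tgt e).symm, PLmat, hL, one_mul]
  exact hε.le_div_denom hP del t e hden

lemma le_Phat_of_isTerminal (hε : IsWeightFloor G P B ε) (hP : IsWeighting G P) {t : ℕ}
    {d : DelayNode m B} (hterm : isTerminal d) (hd : phi G del t d = 1) :
    ε ≤ Phat G P del (t + 1) (Sum.inl (G.tgt (edgeOf d))) (Sum.inr d) := by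
  have hw : 0 < wgt G del (t + 1) (G.tgt (edgeOf d)) (G.src (edgeOf d)) :=
    Finset.card_pos.2 ⟨d, by simp [hterm, hd]⟩
  have hden : 0 < denom G del (t + 1) (G.tgt (edgeOf d)) (G.src (edgeOf d)) :=
    add_pos_of_pos_of_nonneg (Nat.cast_pos.2 hw) (Lmat_nonneg ..)
  have hJ : Jmat G B (G.tgt (edgeOf d)) d = 1 := if_pos ⟨rfl, hterm⟩
  rw [Phat, fromBlocks_apply₁₂, PFmat, hJ, Nat.add_sub_cancel, hd, one_mul, one_mul]
  exact hε.le_div_denom hP del _ _ hden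

end IsWeightFloor

end Weights

section Reachability

lemma reaches_inl_of_le (hP : IsWeighting G P) (hε : IsWeightFloor G P B ε) (i : Fin n)
    {s t : ℕ} (hst : s ≤ t) : Reaches G P del ε (s, Sum.inl i) (t, Sum.inl i) := by
  induction t, hst using Nat.le_induction with
  | base => exact .refl
  | succ t _ ih => exact ih.tail (.step trivial ((hε.le_diag i).trans (le_P11_self hP del _ i)))

lemma exists_reaches_inr (hP : IsWeighting G P) (hε : IsWeightFloor G P B ε) {t : ℕ}
    {d : DelayNode m B} (hd : phi G del t d = 1) :
    ∃ s, s + posIdx d + 1 = t ∧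
      Reaches G P del ε (s, Sum.inl (G.src (edgeOf d))) (t, Sum.inr d) := by
  induction t generalizing d with
  | zero => exact absurd hd zero_ne_one
  | succ t ih =>
    have hstep : Influences (Phat G P del) (fun t => {v | occupied G del t v}) ε
        (t, feeder G d) (t + 1, Sum.inr d) := .step hd <| by
      rw [Phat_inr_of_phi_eq_one P hd, Pi.single_eq_same]
      exact hε.le_one hP (G.src (edgeOf d))
    have hfeeder := occupied_feeder hd
    unfold feeder at hstep hfeeder
    split_ifs at hstep hfeeder with hpos
    · exact ⟨t, by rw [hpos, add_zero], .single hstep⟩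
    · obtain ⟨s, hs, hreach⟩ := ih hfeeder
      have hprev : posIdx (prevNode d) = posIdx d - 1 := rfl
      exact ⟨s, by omega, hreach.tail hstep⟩

lemma reaches_tgt (hP : IsWeighting G P) (hε : IsWeightFloor G P B ε) (t : ℕ) (e : Fin m) :
    Reaches G P del ε (t, Sum.inl (G.src e)) (t + (B + 1), Sum.inl (G.tgt e)) := by
  have hdelay := (del (t + 1) e).2
  rcases hdel : (del (t + 1) e).1 with _ | l
  · have hstep : Reaches G P del ε (t, Sum.inl (G.src e)) (t + 1, Sum.inl (G.tgt e)) :=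
      .single (.step trivial (hε.le_Phat_of_undelayed hP hdel))
    exact hstep.trans (reaches_inl_of_le hP hε _ (by omega))
  · have hl : l < B := by omega
    let d : DelayNode m B := ⟨(e, ⟨l, hl⟩, ⟨l, hl⟩), le_rfl⟩
    have hpos : posIdx d = l := rfl
    have hphi : phi G del (t + 1 + posIdx d) d = 1 := phi_add_posIdx hdel
    obtain ⟨s, hs, hreach⟩ := exists_reaches_inr hP hε hphi
    obtain rfl : s = t := by omega
    have hdeliver : Reaches G P del ε (s, Sum.inl (G.src e))
        (s + 1 + posIdx d + 1, Sum.inl (G.tgt e)) :=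
      hreach.tail (.step trivial (hε.le_Phat_of_isTerminal hP rfl hphi))
    exact hdeliver.trans (reaches_inl_of_le hP hε _ (by omega))

lemma exists_reaches_of_path (hP : IsWeighting G P) (hε : IsWeightFloor G P B ε) {i j : Fin n}
    (hij : Relation.ReflTransGen (HasEdge G) i j) :
    ∃ k, ∀ t, Reaches G P del ε (t, Sum.inl i) (t + k, Sum.inl j) := by
  induction hij with
  | refl => exact ⟨0, fun _ => .refl⟩
  | tail _ hedge ih =>
    obtain ⟨k, hk⟩ := ih
    obtain ⟨e, rfl, rfl⟩ := hedge
    refine ⟨k + (B + 1), fun t => ?_⟩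
    rw [← add_assoc]
    exact (hk t).trans (reaches_tgt hP hε (t + k) e)

lemma exists_reaches_occupied (hP : IsWeighting G P) (hε : IsWeightFloor G P B ε) {r : Fin n}
    (hr : ∀ j, Relation.ReflTransGen (HasEdge G) r j) :
    ∃ T, ∀ t v, occupied G del (t + T) v → Reaches G P del ε (t, Sum.inl r) (t + T, v) := by
  choose k hk using fun j => exists_reaches_of_path (del := del) hP hε (hr j)
  obtain ⟨K, hK⟩ := Finite.exists_le k
  have hcompute : ∀ t s j, t + K ≤ s → Reaches G P del ε (t, Sum.inl r) (s, Sum.inl j) :=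
    fun t s j hs => (hk j t).trans
      (reaches_inl_of_le hP hε j ((Nat.add_le_add_left (hK j) t).trans hs))
  refine ⟨K + B, fun t => ?_⟩
  rintro (j | d) hv
  · exact hcompute t _ j (by omega)
  · obtain ⟨s, hs, hreach⟩ := exists_reaches_inr hP hε hv
    have hpos : posIdx d < B := d.val.2.2.2
    exact (hcompute t s _ (by omega)).trans hreach

end Reachability

end RandomDelay

open RandomDelay in
theorem random_delay_consensus_general
    {n m B : ℕ} (G : DGraph n m) (P : Matrix (Fin n) (Fin n) ℝ) (hP : IsWeighting G P)
    (r : Fin n) (hr : ∀ j, Relation.ReflTransGen (HasEdge G) r j)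
    (del : ℕ → Fin m → Fin (B + 1)) (x0 : Fin n → ℝ) :
    ∃ v : ℝ,
      (∀ i : Fin n,
        Tendsto (fun t => xhat G P del x0 t (Sum.inl i)) atTop (nhds v)) ∧
      Tendsto (fun t => occMax G P del x0 t) atTop (nhds v) ∧
      Tendsto (fun t => occMin G P del x0 t) atTop (nhds v) := by
  obtain ⟨ε, hε⟩ := exists_isWeightFloor hP B
  obtain ⟨T, hT⟩ := exists_reaches_occupied (del := del) hP hε hr
  have hx : IsTrajectory (Phat G P del) (xhat G P del x0) := fun _ => rfl
  obtain ⟨v, hmin, hmax⟩ := (isAveraging_Phat hP del).exists_tendsto_sInf_sSup hx hε.pos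
    fun t => ⟨Sum.inl r, trivial, hT t⟩
  exact ⟨v, fun i => tendsto_of_tendsto_of_tendsto_of_le_of_le hmin hmax
    (fun t => sInf_image_le (xhat G P del x0 t) (v := Sum.inl i) trivial)
    (fun t => le_sSup_image (xhat G P del x0 t) (v := Sum.inl i) trivial), hmax, hmin⟩

open RandomDelay Filter in
/-- **Consensus among occupied nodes.**  For every realization of the delays and
every initial vector, there is a value `v` such that the state of every compute
node converges to `v`, and both the occupied maximum and the occupied minimum
converge to `v`. -/
theorem random_delay_consensus
    {n m B : ℕ} (hn : 0 < n) (hB : 1 ≤ B)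
    (G : DGraph n m) (P : Matrix (Fin n) (Fin n) ℝ) (hV : G.Valid P)
    (del : ℕ → Fin m → Fin (B + 1)) (x0 : Fin n → ℝ) :
    ∃ v : ℝ,
      (∀ i : Fin n,
        Tendsto (fun t => xhat G P del x0 t (Sum.inl i)) atTop (nhds v)) ∧
      Tendsto (fun t => occMax G P del x0 t) atTop (nhds v) ∧
      Tendsto (fun t => occMin G P del x0 t) atTop (nhds v) :=
  random_delay_consensus_general G P (.of_valid hV) ⟨0, hn⟩ (hV.connected _) del x0
end

section
/- For every t ≥ 1, every nonzero row of M₂(t) has entries summing to exactly 1. -/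
open Matrix Filter BigOperators
open scoped Classical

/-!
Let `u(t)` be the indicator of the nodes occupied at time `t`. The weights in a compute row of
`P̂(t+1)` are balanced by the diagonal entry and only occupied terminal nodes deliver, while a delay
row reproduces the recursion for `φ`; hence `P̂(t+1) u(t) = u(t+1)`, and `M(t) u(0) = u(t)` says
that the rows of `M₂(t)` sum to `φ(t)`.

A delay node has at most one possible source, so each delay row of `P̂(t)` is zero or a standard
basis vector. Consequently `φ` is `{0,1}`-valued and the rows of `M₂(t)` at unoccupied nodes vanish.
A nonzero row therefore belongs to an occupied node and sums to `1`.
-/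

namespace RandomDelay

variable {n m B : ℕ} (G : DGraph n m) (P : Matrix (Fin n) (Fin n) ℝ)
  (del : ℕ → Fin m → Fin (B + 1)) (t : ℕ)

/-- The vector `u(t) = (1_n, φ(t))`, the indicator of the nodes occupied at time `t`. -/
noncomputable def occupancy : Fin n ⊕ DelayNode m B → ℝ :=
  Sum.elim 1 (phi G del t)

/-- The row of `P̂(t)` at the delay node `d`, that is, row `d` of the block `[R(t) C]`. It is
defined apart from `P̂(t)` because it does not depend on the weights `P`. -/
noncomputable def delayRow (d : DelayNode m B) : Fin n ⊕ DelayNode m B → ℝ :=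
  Sum.elim (Rmat G del t d) (Cmat m B d)

lemma Phat_inr (d : DelayNode m B) : Phat G P del t (Sum.inr d) = delayRow G del t d := by
  ext (j | d') <;> rfl

section DelayRows

variable {d : DelayNode m B}

lemma Rmat_row_eq_zero_of_posIdx_ne_zero (h : posIdx d ≠ 0) : Rmat G del t d = 0 := by
  ext j
  simp [Rmat, h]

variable (d) in
lemma Rmat_row_eq_zero_or_single :
    Rmat G del t d = 0 ∨ Rmat G del t d = Pi.single (G.src (edgeOf d)) 1 := by
  by_cases h : posIdx d = 0 ∧ (del t (edgeOf d)).1 = lenIdx d + 1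
  · right
    ext j
    simp [Rmat, h, Pi.single_apply, eq_comm]
  · left
    ext j
    simp [Rmat, h]

lemma Cmat_row_eq_zero_of_posIdx_eq_zero (h : posIdx d = 0) : Cmat m B d = 0 := by
  ext d'
  simp [Cmat, h]

lemma delayNode_ext {d' : DelayNode m B} (edge : d.val.1 = d'.val.1)
    (chain : d.val.2.1 = d'.val.2.1) (pos : posIdx d = posIdx d') : d = d' :=
  Subtype.ext (Prod.ext edge (Prod.ext chain (Fin.ext pos)))

lemma exists_Cmat_row_eq_single_of_posIdx_ne_zero (h : posIdx d ≠ 0) :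
    ∃ d', Cmat m B d = Pi.single d' 1 := by
  let pred : DelayNode m B :=
    ⟨(d.val.1, d.val.2.1, ⟨posIdx d - 1, (Nat.sub_le _ _).trans_lt d.val.2.2.isLt⟩),
      (Nat.sub_le _ _).trans d.property⟩
  have hpred : posIdx d = posIdx pred + 1 := (Nat.succ_pred_eq_of_ne_zero h).symm
  refine ⟨pred, ?_⟩
  ext d'
  rw [Pi.single_apply]
  refine if_congr ⟨?_, ?_⟩ rfl rfl
  · rintro ⟨edge, chain, pos⟩
    exact delayNode_ext edge.symm chain.symm (Nat.succ.inj (pos.symm.trans hpred))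
  · rintro rfl
    exact ⟨rfl, rfl, hpred⟩

variable (d) in
lemma delayRow_eq_zero_or_single :
    delayRow G del t d = 0 ∨ ∃ v, delayRow G del t d = Pi.single v 1 := by
  by_cases h : posIdx d = 0
  · rw [delayRow, Cmat_row_eq_zero_of_posIdx_eq_zero h]
    rcases Rmat_row_eq_zero_or_single G del t d with hR | hR
    · exact .inl (by rw [hR, Sum.elim_zero_zero])
    · exact .inr ⟨.inl (G.src (edgeOf d)), by rw [hR, Sum.elim_single_zero]⟩
  · obtain ⟨d', hC⟩ := exists_Cmat_row_eq_single_of_posIdx_ne_zero h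
    have hR : Rmat G del t d = 0 := Rmat_row_eq_zero_of_posIdx_ne_zero G del t h
    exact .inr ⟨.inr d', by rw [delayRow, hR, hC, Sum.elim_zero_single]⟩

end DelayRows

lemma occupancy_succ_inr (d : DelayNode m B) :
    occupancy G del (t + 1) (Sum.inr d) = delayRow G del (t + 1) d ⬝ᵥ occupancy G del t := by
  rw [delayRow, occupancy, occupancy, sumElim_dotProduct_sumElim]
  rfl

lemma occupancy_eq_zero_or_one (v : Fin n ⊕ DelayNode m B) :
    occupancy G del t v = 0 ∨ occupancy G del t v = 1 := by
  induction t generalizing v with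
  | zero => rcases v with i | d <;> simp [occupancy, phi]
  | succ t ih =>
    rcases v with i | d
    · exact .inr rfl
    rw [occupancy_succ_inr]
    rcases delayRow_eq_zero_or_single G del (t + 1) d with h | ⟨w, h⟩
    · exact .inl (by rw [h, zero_dotProduct])
    · rw [h, single_one_dotProduct]
      exact ih w

lemma P11_mulVec_one : P11 G P del t *ᵥ 1 = 1 - PFmat G P del t *ᵥ 1 := by
  have hdiag : diagonal (fun i => ∑ d, PFmat G P del t i d + ∑ j, PLmat G P del t i j) *ᵥ 1 =
      PFmat G P del t *ᵥ 1 + PLmat G P del t *ᵥ 1 := by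
    ext i
    rw [mulVec_diagonal]
    simp [mulVec, dotProduct]
  rw [P11, add_mulVec, sub_mulVec, one_mulVec, hdiag]
  abel

lemma PFmat_mulVec_phi :
    PFmat G P del (t + 1) *ᵥ phi G del t = PFmat G P del (t + 1) *ᵥ 1 := by
  ext i
  refine Finset.sum_congr rfl fun d _ => ?_
  have hphi : phi G del t d = 0 ∨ phi G del t d = 1 :=
    occupancy_eq_zero_or_one G del t (Sum.inr d)
  rcases hphi with h | h <;> simp [PFmat, h]

lemma Phat_mulVec_occupancy :
    Phat G P del (t + 1) *ᵥ occupancy G del t = occupancy G del (t + 1) := by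
  ext (i | d)
  · simp [Phat, occupancy, fromBlocks_mulVec, P11_mulVec_one, PFmat_mulVec_phi]
  · rw [occupancy_succ_inr, mulVec, Phat_inr]

lemma Mprod_mulVec_occupancy_zero :
    Mprod G P del t *ᵥ occupancy G del 0 = occupancy G del t := by
  induction t with
  | zero => exact one_mulVec _
  | succ t ih => rw [Mprod, ← mulVec_mulVec, ih, Phat_mulVec_occupancy]

lemma M2_row_sum_eq_phi (d : DelayNode m B) : ∑ j, M2 G P del t d j = phi G del t d := by
  have h := congrFun (Mprod_mulVec_occupancy_zero G P del t) (Sum.inr d)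
  simpa [mulVec, dotProduct, occupancy, phi, M2] using h

variable {G del t} in
lemma Mprod_inl_eq_zero_of_occupancy_eq_zero {v : Fin n ⊕ DelayNode m B}
    (hv : occupancy G del t v = 0) (j : Fin n) :
    Mprod G P del t v (Sum.inl j) = 0 := by
  induction t generalizing v with
  | zero =>
    rcases v with i | d
    · simp [occupancy] at hv
    · simp [Mprod]
  | succ t ih =>
    rcases v with i | d
    · simp [occupancy] at hv
    rw [occupancy_succ_inr] at hv
    rw [Mprod, mul_apply_eq_vecMul, Phat_inr]
    rcases delayRow_eq_zero_or_single G del (t + 1) d with h | ⟨w, h⟩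
    · rw [h, zero_vecMul, Pi.zero_apply]
    · rw [h, single_one_dotProduct] at hv
      rw [h, single_one_vecMul]
      exact ih hv

end RandomDelay

open RandomDelay in
theorem random_delay_M2_rows_sum_one_general
    {n m B : ℕ} (G : DGraph n m) (P : Matrix (Fin n) (Fin n) ℝ)
    (del : ℕ → Fin m → Fin (B + 1)) (t : ℕ) (d : DelayNode m B)
    (hd : ∃ j, M2 G P del t d j ≠ 0) :
    ∑ j, M2 G P del t d j = 1 := by
  obtain ⟨j, hj⟩ := hd
  have hoccupied : occupancy G del t (Sum.inr d) ≠ 0 := fun h =>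
    hj (Mprod_inl_eq_zero_of_occupancy_eq_zero P h j)
  rw [M2_row_sum_eq_phi]
  exact (occupancy_eq_zero_or_one G del t (Sum.inr d)).resolve_left hoccupied

open RandomDelay in
/-- **Nonzero rows of `M₂(t)` sum to one.**  For every `t ≥ 1`, every nonzero row
of the bottom-left block `M₂(t)` of `M(t) = P̂(t)⋯P̂(1)` has entries summing to `1`. -/
theorem random_delay_M2_rows_sum_one
    {n m B : ℕ} (hn : 0 < n) (hB : 1 ≤ B)
    (G : DGraph n m) (P : Matrix (Fin n) (Fin n) ℝ) (hV : G.Valid P)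
    (del : ℕ → Fin m → Fin (B + 1)) (t : ℕ) (ht : 1 ≤ t) (d : DelayNode m B)
    (hd : ∃ j, M2 G P del t d j ≠ 0) :
    ∑ j, M2 G P del t d j = 1 := by
  exact random_delay_M2_rows_sum_one_general G P del t d hd
end
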